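/- Suppose each c_j is strictly increasing on T_j (regularity) and let p* : T → ℝ^m be any measurable allocation such that at every t ∈ T: if max_{i} W_i(t) > 0 then p*_k(t) = 1 for some maximizer k of i ↦ W_i(t) and p*_i(t) = 0 for all i ≠ k, while if max_i W_i(t) ≤ 0 then p*_i(t) = 0 for all i. Then: (a) p* satisfies fraction feasibility (FF); (b) for each j, the interim allocation p̃*_j(τ) = ∫_{T_{−j}} (∑_{i∈S_j} p*_i(τ, t_{−j})) f_{−j}(t_{−j}) dt_{−j} is monotone increasing on T_j; and (c) for every measurable p : T → ℝ^m satisfying FF, ∫_T ∑_{i=1}^m W_i(t) p*_i(t) f(t) dt ≥ ∫_T ∑_{i=1}^m W_i(t) p_i(t) f(t) dt. (Proposition 2.) -/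

import Mathlib

open MeasureTheory Finset

noncomputable section Caching

/-- The joint type space T = ∏_j [a_j, ā_j]. -/
def Tspace {n : ℕ} (a abar : Fin n → ℝ) : Set (Fin n → ℝ) :=
  Set.univ.pi fun j => Set.Icc (a j) (abar j)

/-- The joint density f(t) = ∏_j f_j(t_j). -/
def jointDens {n : ℕ} (f : Fin n → ℝ → ℝ) (t : Fin n → ℝ) : ℝ :=
  ∏ j, f j (t j)

/-- Interim allocation p̃_j(τ) = ∫_{T_{−j}} (∑_{i∈S_j} p_i(τ, t_{−j})) f_{−j}(t_{−j}) dt_{−j},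
written as an integral over the whole type space against the joint density
(the coordinate j integrates out since f_j is a probability density). -/
def interimAlloc {n m : ℕ} (a abar : Fin n → ℝ) (f : Fin n → ℝ → ℝ)
    (S : Fin n → Finset (Fin m)) (p : (Fin n → ℝ) → Fin m → ℝ)
    (j : Fin n) (τ : ℝ) : ℝ :=
  ∫ t in Tspace a abar, (∑ i ∈ S j, p (Function.update t j τ) i) * jointDens f t

/-- Interim payment x̃_j(τ) = ∫_{T_{−j}} x_j(τ, t_{−j}) f_{−j}(t_{−j}) dt_{−j}. -/
def interimPay {n : ℕ} (a abar : Fin n → ℝ) (f : Fin n → ℝ → ℝ)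
    (x : (Fin n → ℝ) → Fin n → ℝ) (j : Fin n) (τ : ℝ) : ℝ :=
  ∫ t in Tspace a abar, x (Function.update t j τ) j * jointDens f t

/-- Truthful interim utility ṽ_j(t) = θ t p̃_j(t) − x̃_j(t). -/
def vtld {n m : ℕ} (θ : ℝ) (a abar : Fin n → ℝ) (f : Fin n → ℝ → ℝ)
    (S : Fin n → Finset (Fin m)) (p : (Fin n → ℝ) → Fin m → ℝ)
    (x : (Fin n → ℝ) → Fin n → ℝ) (j : Fin n) (t : ℝ) : ℝ :=
  θ * t * interimAlloc a abar f S p j t - interimPay a abar f x j t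

/-- The virtual valuation c_j(t) = t − (1 − F_j(t))/f_j(t). -/
def virtVal {n : ℕ} (a : Fin n → ℝ) (f : Fin n → ℝ → ℝ) (j : Fin n) (t : ℝ) : ℝ :=
  t - (1 - ∫ τ in (a j)..t, f j τ) / f j t

/-- The virtual welfare of content i at type profile t:
W_i(t) = ∑_{s ∈ Ω_i} (θ c_s(t_s) − h(θ)) − r_i, where Ω_i = {j : i ∈ S_j}. -/
def virtWelfare {n m : ℕ} (θ hval : ℝ) (r : Fin m → ℝ)
    (S : Fin n → Finset (Fin m)) (c : Fin n → ℝ → ℝ)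
    (i : Fin m) (t : Fin n → ℝ) : ℝ :=
  (∑ s ∈ Finset.univ.filter fun j => i ∈ S j, (θ * c s (t s) - hval)) - r i

theorem aux_pick {m : ℕ} (A : Finset (Fin m)) (q : Fin m → ℝ) (k : Fin m)
    (h1 : q k = 1) (h0 : ∀ i, i ≠ k → q i = 0) :
    ∑ i ∈ A, q i = if k ∈ A then 1 else 0 := by
  have : ∀ i ∈ A, q i = if k = i then 1 else 0 := by
    intro i _
    by_cases h : k = i
    · subst h; simp [h1]
    · simp [h, h0 i (Ne.symm h)]
  rw [Finset.sum_congr rfl this]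
  simp

theorem aux_int {n : ℕ} (a abar : Fin n → ℝ) (f : Fin n → ℝ → ℝ)
    (hfprob : ∀ j, ∫ t in Set.Icc (a j) (abar j), f j t = 1) :
    IntegrableOn (jointDens f) (Tspace a abar) := by
  have hi : ∀ j, Integrable (f j) (volume.restrict (Set.Icc (a j) (abar j))) := by
    intro j
    by_contra h
    have := hfprob j
    rw [integral_undef h] at this
    norm_num at this
  unfold IntegrableOn Tspace
  rw [volume_pi, Measure.restrict_pi_pi]
  exact Integrable.fintype_prod hi

theorem aux_bdd {n m : ℕ} (a abar : Fin n → ℝ) (p : (Fin n → ℝ) → Fin m → ℝ)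
    (hp : ∀ t ∈ Tspace a abar, (∀ i, 0 ≤ p t i) ∧ ∑ i, p t i ≤ 1)
    (A : Finset (Fin m)) (t : Fin n → ℝ) (ht : t ∈ Tspace a abar) :
    ‖∑ i ∈ A, p t i‖ ≤ 1 := by
  obtain ⟨h0, h1⟩ := hp t ht
  rw [Real.norm_of_nonneg (Finset.sum_nonneg fun i _ => h0 i)]
  exact (Finset.sum_le_sum_of_subset_of_nonneg (Finset.subset_univ A)
    fun i _ _ => h0 i).trans h1

theorem aux_shift {n m : ℕ} (θ hval : ℝ) (r : Fin m → ℝ)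
    (S : Fin n → Finset (Fin m)) (c : Fin n → ℝ → ℝ) (t : Fin n → ℝ) (j : Fin n)
    (x y : ℝ) (i : Fin m) :
    virtWelfare θ hval r S c i (Function.update t j y) =
      virtWelfare θ hval r S c i (Function.update t j x) +
        if i ∈ S j then θ * (c j y - c j x) else 0 := by
  unfold virtWelfare
  have : ∀ s, θ * c s (Function.update t j y s) - hval =
      (θ * c s (Function.update t j x s) - hval) +
        if j = s then θ * (c j y - c j x) else 0 := by
    intro s
    by_cases h : j = s
    · subst h; simp; ring
    · simp [h, Function.update_of_ne (Ne.symm h)]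
  rw [Finset.sum_congr rfl fun s _ => this s, Finset.sum_add_distrib, Finset.sum_ite_eq]
  simp only [Finset.mem_filter, Finset.mem_univ, true_and]
  ring

theorem aux_meas {n : ℕ} (a abar : Fin n → ℝ) : MeasurableSet (Tspace a abar) :=
  MeasurableSet.univ_pi fun _ => measurableSet_Icc

theorem aux_upd {n : ℕ} (a abar : Fin n → ℝ) (t : Fin n → ℝ) (ht : t ∈ Tspace a abar)
    (j : Fin n) (x : ℝ) (hx : x ∈ Set.Icc (a j) (abar j)) :
    Function.update t j x ∈ Tspace a abar := by
  intro s _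
  by_cases h : s = j
  · subst h; simpa using hx
  · rw [Function.update_of_ne h]; exact ht s (Set.mem_univ s)

theorem aux_pos {n : ℕ} (a abar : Fin n → ℝ) (f : Fin n → ℝ → ℝ)
    (hfpos : ∀ j, ∀ t ∈ Set.Icc (a j) (abar j), 0 < f j t)
    (t : Fin n → ℝ) (ht : t ∈ Tspace a abar) : 0 ≤ jointDens f t :=
  Finset.prod_nonneg fun j _ => (hfpos j _ (ht j (Set.mem_univ j))).le

theorem aux_intW {n m : ℕ} (a abar : Fin n → ℝ) (W : Fin m → (Fin n → ℝ) → ℝ)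
    (g : (Fin n → ℝ) → ℝ) (p : (Fin n → ℝ) → Fin m → ℝ) (hpm : Measurable p)
    (hp : ∀ t ∈ Tspace a abar, (∀ i, 0 ≤ p t i) ∧ ∑ i, p t i ≤ 1)
    (hW : ∀ i, IntegrableOn (fun t => W i t * g t) (Tspace a abar)) :
    IntegrableOn (fun t => (∑ i, W i t * p t i) * g t) (Tspace a abar) := by
  have : (fun t => (∑ i, W i t * p t i) * g t) =
      fun t => ∑ i, p t i * (W i t * g t) := by
    funext t
    rw [Finset.sum_mul]
    exact Finset.sum_congr rfl fun i _ => by ring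
  rw [this]
  refine integrable_finsetSum _ fun i _ => ?_
  refine Integrable.bdd_mul (c := 1) (hW i)
    ((measurable_pi_apply i).comp hpm).aestronglyMeasurable ?_
  refine (ae_restrict_iff' (aux_meas a abar)).2 (Filter.Eventually.of_forall fun t ht => ?_)
  simpa using aux_bdd a abar p hp {i} t ht

/-- Proposition 2: under regularity, the virtual-welfare-maximizing allocation p*
(a) is fraction feasible, (b) has monotone increasing interim allocations, and
(c) maximizes the expected virtual welfare ∫_T ∑_i W_i(t) p_i(t) f(t) dt over
all measurable fraction-feasible allocations p. -/
theorem stmt_11 {n m : ℕ} (θ hval : ℝ) (hθ : 0 < θ) (hh : 0 ≤ hval)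
    (r : Fin m → ℝ) (a abar : Fin n → ℝ) (hab : ∀ j, a j < abar j)
    (f : Fin n → ℝ → ℝ)
    (hfmeas : ∀ j, Measurable (f j))
    (hfpos : ∀ j, ∀ t ∈ Set.Icc (a j) (abar j), 0 < f j t)
    (hfprob : ∀ j, ∫ t in Set.Icc (a j) (abar j), f j t = 1)
    (S : Fin n → Finset (Fin m))
    -- regularity: each virtual valuation is (strictly) increasing
    (hreg : ∀ j, StrictMonoOn (virtVal a f j) (Set.Icc (a j) (abar j)))
    (pstar : (Fin n → ℝ) → Fin m → ℝ) (hpsmeas : Measurable pstar)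
    (hp1 : ∀ t ∈ Tspace a abar,
        (∃ i, 0 < virtWelfare θ hval r S (virtVal a f) i t) →
        ∃ k, (∀ i, virtWelfare θ hval r S (virtVal a f) i t
              ≤ virtWelfare θ hval r S (virtVal a f) k t) ∧
          pstar t k = 1 ∧ ∀ i, i ≠ k → pstar t i = 0)
    (hp2 : ∀ t ∈ Tspace a abar,
        (∀ i, virtWelfare θ hval r S (virtVal a f) i t ≤ 0) → ∀ i, pstar t i = 0)
    (hWint : ∀ i, IntegrableOn
        (fun t => virtWelfare θ hval r S (virtVal a f) i t * jointDens f t)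
        (Tspace a abar)) :
    -- (a) fraction feasibility of p*
    (∀ t ∈ Tspace a abar, (∀ i, 0 ≤ pstar t i) ∧ ∑ i, pstar t i ≤ 1) ∧
    -- (b) monotone interim allocations
    (∀ j, MonotoneOn (interimAlloc a abar f S pstar j) (Set.Icc (a j) (abar j))) ∧
    -- (c) optimality among fraction-feasible allocations
    (∀ p : (Fin n → ℝ) → Fin m → ℝ, Measurable p →
      (∀ t ∈ Tspace a abar, (∀ i, 0 ≤ p t i) ∧ ∑ i, p t i ≤ 1) →
      (∫ t in Tspace a abar,
          (∑ i, virtWelfare θ hval r S (virtVal a f) i t * p t i) * jointDens f t)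
        ≤ ∫ t in Tspace a abar,
            (∑ i, virtWelfare θ hval r S (virtVal a f) i t * pstar t i)
              * jointDens f t) := by
  have hA : ∀ t ∈ Tspace a abar, (∀ i, 0 ≤ pstar t i) ∧ ∑ i, pstar t i ≤ 1 := by
    intro t ht
    by_cases h : ∃ i, 0 < virtWelfare θ hval r S (virtVal a f) i t
    · obtain ⟨k, _, h1, h0⟩ := hp1 t ht h
      refine ⟨fun i => ?_, ?_⟩
      · by_cases hik : i = k
        · rw [hik, h1]; exact zero_le_one
        · rw [h0 i hik]
      · rw [aux_pick _ _ k h1 h0]; simp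
    · push Not at h
      have := hp2 t ht h
      simp [this]
  refine ⟨hA, ?_, ?_⟩
  · intro j x hx y hy hxy
    rcases hxy.eq_or_lt with rfl | hlt
    · exact le_rfl
    have hI : ∀ z ∈ Set.Icc (a j) (abar j), IntegrableOn
        (fun t => (∑ i ∈ S j, pstar (Function.update t j z) i) * jointDens f t)
        (Tspace a abar) := by
      intro z hz
      refine Integrable.bdd_mul (c := 1) (aux_int a abar f hfprob) ?_ ?_
      · refine Measurable.aestronglyMeasurable ?_
        refine Finset.measurable_sum _ fun i _ => ?_
        exact (measurable_pi_apply i).comp (hpsmeas.comp measurable_update_left)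
      · refine (ae_restrict_iff' (aux_meas a abar)).2
          (Filter.Eventually.of_forall fun t ht => ?_)
        exact aux_bdd a abar pstar hA (S j) _ (aux_upd a abar t ht j z hz)
    refine setIntegral_mono_on (hI x hx) (hI y hy) (aux_meas a abar) fun t ht => ?_
    refine mul_le_mul_of_nonneg_right ?_ (aux_pos a abar f hfpos t ht)
    have htx := aux_upd a abar t ht j x hx
    have hty := aux_upd a abar t ht j y hy
    have hy0 : 0 ≤ ∑ i ∈ S j, pstar (Function.update t j y) i :=
      Finset.sum_nonneg fun i _ => (hA _ hty).1 i
    by_cases h : ∃ i, 0 < virtWelfare θ hval r S (virtVal a f) i (Function.update t j x)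
    · obtain ⟨k, hk, h1, h0⟩ := hp1 _ htx h
      rw [aux_pick _ _ k h1 h0]
      split_ifs with hkS
      · have hd : 0 < θ * (virtVal a f j y - virtVal a f j x) :=
          mul_pos hθ (sub_pos.2 (hreg j hx hy hlt))
        have hs := aux_shift θ hval r S (virtVal a f) t j x y
        have hsk := hs k
        rw [if_pos hkS] at hsk
        obtain ⟨i0, hi0⟩ := h
        have hki := hk i0
        obtain ⟨l, hl, l1, l0⟩ := hp1 _ hty ⟨k, by linarith⟩
        have hlS : l ∈ S j := by
          by_contra hn
          have hsl := hs l
          rw [if_neg hn] at hsl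
          have := hl k
          have := hk l
          linarith
        rw [aux_pick _ _ l l1 l0, if_pos hlS]
      · exact hy0
    · push Not at h
      have := hp2 _ htx h
      simpa [this] using hy0
  · intro p hpm hp
    refine setIntegral_mono_on
      (aux_intW a abar (virtWelfare θ hval r S (virtVal a f)) _ p hpm hp hWint)
      (aux_intW a abar (virtWelfare θ hval r S (virtVal a f)) _ pstar hpsmeas hA hWint)
      (aux_meas a abar) fun t ht => ?_
    refine mul_le_mul_of_nonneg_right ?_ (aux_pos a abar f hfpos t ht)
    obtain ⟨q0, q1⟩ := hp t ht
    by_cases h : ∃ i, 0 < virtWelfare θ hval r S (virtVal a f) i t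
    · obtain ⟨k, hk, h1, h0⟩ := hp1 t ht h
      obtain ⟨i0, hi0⟩ := h
      have hkpos := hi0.trans_le (hk i0)
      have hR : ∑ i, virtWelfare θ hval r S (virtVal a f) i t * pstar t i =
          virtWelfare θ hval r S (virtVal a f) k t := by
        rw [Finset.sum_eq_single k]
        · rw [h1, mul_one]
        · intro i _ hik; rw [h0 i hik, mul_zero]
        · simp
      rw [hR]
      calc _ ≤ ∑ i, virtWelfare θ hval r S (virtVal a f) k t * p t i :=
            Finset.sum_le_sum fun i _ => mul_le_mul_of_nonneg_right (hk i) (q0 i)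
        _ = virtWelfare θ hval r S (virtVal a f) k t * ∑ i, p t i := by
            rw [Finset.mul_sum]
        _ ≤ _ := mul_le_of_le_one_right hkpos.le q1
    · push Not at h
      have h0 := hp2 t ht h
      simp only [h0, mul_zero, Finset.sum_const_zero]
      exact Finset.sum_nonpos fun i _ => mul_nonpos_of_nonpos_of_nonneg (h i) (q0 i)

end Caching
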